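/- Let ε > 0 and let π be a strategy profile of a finite discounted stochastic game with ‖f(π) − π‖∞ ≤ ε. Then π is a κ-approximate Markov perfect equilibrium with κ = A_max·(√ε'/(1−γ) + R_max√ε' + ε')/(1−γ), where ε' = ε·(1 + A_max R_max/(1−γ)). -/

import Mathlib

/-!
Fix an agent `i` and write `V` for its value under `π`, and `x_b(t)` (`adv`) for its advantage at
state `t`: play `b` once at `t`, then follow `π`, minus `V t`.

* A subsolution `u ≤ c + γ P u` with `P` row-stochastic satisfies `u ≤ c / (1 - γ)` (`le_of_sub`).
  Hence `1 - γ P^π` is invertible, `V` solves the Bellman equation and `0 ≤ V ≤ Rmax / (1 - γ)`.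
* Let `δ` be the change of the value when `b` is played at *every* visit to `t`. It satisfies
  `δ = γ P' δ + x_b(t) 1_t`, so `D_b ≥ x_b`, and `D_b = 0` when `x_b ≤ 0` (`adv_le_D`,
  `D_eq_zero`).
* Clearing denominators in `|f(π) - π| ≤ ε` gives `|D_b - π_b T| ≤ ε'` with `T = ∑ D`. Multiply
  `∑ π_b x_b = 0` by `T`: a term with `x_b ≤ 0` has `π_b T ≤ ε'`, so it is at least
  `-ε' Rmax / (1 - γ)`, while a term with `x_b > 0` is at least `(x_b - ε') x_b`. Hence
  `x_b (x_b - ε') ≤ A_i ε' Rmax / (1 - γ)` (`adv_quadratic`), and AM-GM turns this into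
  `x_b ≤ A_max (√ε' / (1 - γ) + Rmax √ε' + ε')`.
* If all advantages are at most `M`, then for any strategy `σ` of agent `i` the difference
  `V^σ - V` is a subsolution with constant `M`, so `V^σ - V ≤ M / (1 - γ)`.
-/

open Finset

/-- A finite discounted stochastic game with `n` agents, `S` states and
action counts `A i` for each agent `i`. -/
structure SG (n S : ℕ) (A : Fin n → ℕ) where
  P : Fin S → (∀ i, Fin (A i)) → Fin S → ℝ
  r : Fin n → Fin S → (∀ i, Fin (A i)) → ℝ
  Rmax : ℝ
  γ : ℝ
  P_nonneg : ∀ s a s', 0 ≤ P s a s'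
  P_sum_one : ∀ s a, ∑ s', P s a s' = 1
  r_nonneg : ∀ i s a, 0 ≤ r i s a
  r_le_Rmax : ∀ i s a, r i s a ≤ Rmax
  γ_nonneg : 0 ≤ γ
  γ_lt_one : γ < 1

namespace SG

variable {n S : ℕ} {A : Fin n → ℕ}

/-- A (behavioral) strategy profile: agent `i` plays at state `s` the distribution
`π i s` on its actions. -/
abbrev Profile (n S : ℕ) (A : Fin n → ℕ) := ∀ i : Fin n, Fin S → Fin (A i) → ℝ

/-- `π` is a genuine strategy profile: each `π i s` is a probability distribution. -/
def IsProfile (π : Profile n S A) : Prop :=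
  (∀ i s a, 0 ≤ π i s a) ∧ ∀ i s, ∑ a, π i s a = 1

/-- `A_max`, the largest number of actions of any agent. -/
def Amax (A : Fin n → ℕ) : ℕ := Finset.univ.sup A

/-- Probability of the joint action `a` at state `s` under profile `π`. -/
def jointProb (π : Profile n S A) (s : Fin S) (a : ∀ i, Fin (A i)) : ℝ :=
  ∏ i, π i s (a i)

/-- The state-transition matrix `P^π` induced by the profile `π`. -/
noncomputable def Pmat (g : SG n S A) (π : Profile n S A) : Matrix (Fin S) (Fin S) ℝ :=
  fun s s' => ∑ a, jointProb π s a * g.P s a s'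

/-- Expected one-step reward `r^{i,π}(s)` of agent `i` at state `s` under `π`. -/
noncomputable def rvec (g : SG n S A) (π : Profile n S A) (i : Fin n) (s : Fin S) : ℝ :=
  ∑ a, jointProb π s a * g.r i s a

/-- The value function `V^{π^i,π^{-i}}` of agent `i` under profile `π`: the unique
solution of the Bellman equation `V = r^{i,π} + γ P^π V`, i.e. `(I − γP^π)⁻¹ r^{i,π}`. -/
noncomputable def V (g : SG n S A) (π : Profile n S A) (i : Fin n) : Fin S → ℝ :=
  Matrix.mulVec (1 - g.γ • g.Pmat π)⁻¹ (g.rvec π i)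

/-- The profile obtained from `π` by letting agent `i` play the pure action `a`
at state `s` (and `π i` at every other state). -/
def devProfile (π : Profile n S A) (i : Fin n) (s : Fin S) (a : Fin (A i)) : Profile n S A :=
  Function.update π i (fun t b => if t = s then (if b = a then (1 : ℝ) else 0) else π i t b)

/-- The one-step-deviation value `V^{π^i,π^{-i}}_{π^i(s,a)=1}(s)`. -/
noncomputable def Vdev (g : SG n S A) (π : Profile n S A) (i : Fin n) (s : Fin S)
    (a : Fin (A i)) : ℝ :=
  g.V (devProfile π i s a) i s

/-- `D^{π}_{a}(s) = max(0, V^{π^i,π^{-i}}_{π^i(s,a)=1}(s) − V^{π^i,π^{-i}}(s))`. -/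
noncomputable def D (g : SG n S A) (π : Profile n S A) (i : Fin n) (s : Fin S)
    (a : Fin (A i)) : ℝ :=
  max 0 (g.Vdev π i s a - g.V π i s)

/-- Nash's improvement map `f` on strategy profiles. -/
noncomputable def f (g : SG n S A) (π : Profile n S A) : Profile n S A :=
  fun i s a => (π i s a + g.D π i s a) / (1 + ∑ b, g.D π i s b)

/-- `π` is a Markov perfect equilibrium: no agent can improve its value at any state
by unilaterally switching to another behavioral strategy. -/
def IsMPE (g : SG n S A) (π : Profile n S A) : Prop :=
  ∀ (s : Fin S) (i : Fin n) (σ : Fin S → Fin (A i) → ℝ),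
    ((∀ t b, 0 ≤ σ t b) ∧ ∀ t, ∑ b, σ t b = 1) →
    g.V (Function.update π i σ) i s ≤ g.V π i s

/-- `π` is an `ε`-approximate Markov perfect equilibrium. -/
def IsApproxMPE (g : SG n S A) (π : Profile n S A) (ε : ℝ) : Prop :=
  ∀ (s : Fin S) (i : Fin n) (σ : Fin S → Fin (A i) → ℝ),
    ((∀ t b, 0 ≤ σ t b) ∧ ∀ t, ∑ b, σ t b = 1) →
    g.V (Function.update π i σ) i s - ε ≤ g.V π i s

end SG

namespace SG

variable {n S : ℕ} {A : Fin n → ℕ}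

/-! ### Subsolutions and the Bellman equation -/

/-- A subsolution `u ≤ c + γ P u` for a row-stochastic `P` is at most `c / (1 - γ)`:
evaluate the inequality at a state where `u` is maximal. -/
lemma le_of_sub {P : Matrix (Fin S) (Fin S) ℝ} (h0 : ∀ s t, 0 ≤ P s t)
    (h1 : ∀ s, ∑ t, P s t = 1) {γ : ℝ} (hγ0 : 0 ≤ γ) (hγ1 : γ < 1) {u : Fin S → ℝ} {c : ℝ}
    (hu : ∀ s, u s ≤ c + γ * ∑ t, P s t * u t) (s : Fin S) : u s ≤ c / (1 - γ) := by
  obtain ⟨m, -, hm⟩ := Finset.exists_max_image Finset.univ u ⟨s, Finset.mem_univ s⟩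
  have hsum : ∑ t, P m t * u t ≤ u m := by
    calc ∑ t, P m t * u t ≤ ∑ t, P m t * u m :=
          Finset.sum_le_sum fun t _ => mul_le_mul_of_nonneg_left (hm t (Finset.mem_univ t)) (h0 m t)
      _ = u m := by rw [← Finset.sum_mul, h1, one_mul]
  have := hu m
  have h2 := mul_le_mul_of_nonneg_left hsum hγ0
  rw [le_div_iff₀ (by linarith)]
  have h3 := mul_le_mul_of_nonneg_right (hm s (Finset.mem_univ s)) (by linarith : 0 ≤ 1 - γ)
  linarith

lemma jointProb_nonneg {π : Profile n S A} (hπ : IsProfile π) (s : Fin S) (a : ∀ i, Fin (A i)) :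
    0 ≤ jointProb π s a :=
  Finset.prod_nonneg fun i _ => hπ.1 i s (a i)

lemma jointProb_sum {π : Profile n S A} (hπ : IsProfile π) (s : Fin S) :
    ∑ a, jointProb π s a = 1 := by
  unfold jointProb
  rw [← Fintype.piFinset_univ, ← Finset.prod_univ_sum (fun i => (Finset.univ : Finset (Fin (A i))))
    (fun i b => π i s b)]
  simp [hπ.2]

lemma Pmat_nonneg (g : SG n S A) {π : Profile n S A} (hπ : IsProfile π) (s t : Fin S) :
    0 ≤ g.Pmat π s t :=
  Finset.sum_nonneg fun a _ => mul_nonneg (jointProb_nonneg hπ s a) (g.P_nonneg s a t)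

lemma Pmat_sum (g : SG n S A) {π : Profile n S A} (hπ : IsProfile π) (s : Fin S) :
    ∑ t, g.Pmat π s t = 1 := by
  unfold Pmat
  rw [Finset.sum_comm]
  simp [← Finset.mul_sum, g.P_sum_one, jointProb_sum hπ]

lemma isUnit_bellman (g : SG n S A) {π : Profile n S A} (hπ : IsProfile π) :
    IsUnit (1 - g.γ • g.Pmat π) := by
  rw [← Matrix.mulVec_injective_iff_isUnit]
  refine (injective_iff_map_eq_zero (Matrix.mulVecLin (1 - g.γ • g.Pmat π))).2 ?_
  intro v hv
  have hv' : ∀ s, v s = g.γ * ∑ t, g.Pmat π s t * v t := by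
    intro s
    have := congrFun hv s
    rw [Matrix.mulVecLin_apply, Matrix.sub_mulVec, Matrix.one_mulVec, Matrix.smul_mulVec] at this
    simp only [Pi.sub_apply, Pi.smul_apply, smul_eq_mul, Pi.zero_apply, Matrix.mulVec,
      dotProduct] at this
    linarith
  funext s
  have h1 := le_of_sub (g.Pmat_nonneg hπ) (g.Pmat_sum hπ) g.γ_nonneg g.γ_lt_one (u := v) (c := 0)
    (fun s => by rw [zero_add]; exact (hv' s).le) s
  have h2 := le_of_sub (g.Pmat_nonneg hπ) (g.Pmat_sum hπ) g.γ_nonneg g.γ_lt_one (u := -v) (c := 0)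
    (fun s => by simp only [Pi.neg_apply, mul_neg, Finset.sum_neg_distrib]; linarith [hv' s]) s
  simp only [zero_div, Pi.neg_apply] at h1 h2
  exact le_antisymm h1 (by simpa using h2)

lemma bellman (g : SG n S A) {π : Profile n S A} (hπ : IsProfile π) (i : Fin n) (s : Fin S) :
    g.V π i s = g.rvec π i s + g.γ * ∑ t, g.Pmat π s t * g.V π i t := by
  have h : (1 - g.γ • g.Pmat π).mulVec (g.V π i) = g.rvec π i := by
    unfold V
    rw [Matrix.mulVec_mulVec, Matrix.mul_nonsing_inv _
      ((Matrix.isUnit_iff_isUnit_det _).1 (g.isUnit_bellman hπ)), Matrix.one_mulVec]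
  have := congrFun h s
  rw [Matrix.sub_mulVec, Matrix.one_mulVec, Matrix.smul_mulVec] at this
  simp only [Pi.sub_apply, Pi.smul_apply, smul_eq_mul, Matrix.mulVec, dotProduct] at this
  linarith

lemma rvec_nonneg (g : SG n S A) {π : Profile n S A} (hπ : IsProfile π) (i : Fin n) (s : Fin S) :
    0 ≤ g.rvec π i s :=
  Finset.sum_nonneg fun a _ => mul_nonneg (jointProb_nonneg hπ s a) (g.r_nonneg i s a)

lemma rvec_le (g : SG n S A) {π : Profile n S A} (hπ : IsProfile π) (i : Fin n) (s : Fin S) :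
    g.rvec π i s ≤ g.Rmax := by
  calc g.rvec π i s ≤ ∑ a, jointProb π s a * g.Rmax :=
        Finset.sum_le_sum fun a _ =>
          mul_le_mul_of_nonneg_left (g.r_le_Rmax i s a) (jointProb_nonneg hπ s a)
    _ = g.Rmax := by rw [← Finset.sum_mul, jointProb_sum hπ, one_mul]

lemma V_nonneg (g : SG n S A) {π : Profile n S A} (hπ : IsProfile π) (i : Fin n) (s : Fin S) :
    0 ≤ g.V π i s := by
  have h := le_of_sub (g.Pmat_nonneg hπ) (g.Pmat_sum hπ) g.γ_nonneg g.γ_lt_one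
    (u := -g.V π i) (c := 0) (fun s => by
      simp only [Pi.neg_apply, mul_neg, Finset.sum_neg_distrib]
      linarith [g.bellman hπ i s, g.rvec_nonneg hπ i s]) s
  simpa using h

lemma V_le (g : SG n S A) {π : Profile n S A} (hπ : IsProfile π) (i : Fin n) (s : Fin S) :
    g.V π i s ≤ g.Rmax / (1 - g.γ) :=
  le_of_sub (g.Pmat_nonneg hπ) (g.Pmat_sum hπ) g.γ_nonneg g.γ_lt_one
    (fun s => by linarith [g.bellman hπ i s, g.rvec_le hπ i s]) s

/-! ### One-step deviations and advantages -/

lemma isProfile_update {π : Profile n S A} (hπ : IsProfile π) (i : Fin n)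
    {σ : Fin S → Fin (A i) → ℝ} (h0 : ∀ t b, 0 ≤ σ t b) (h1 : ∀ t, ∑ b, σ t b = 1) :
    IsProfile (Function.update π i σ) := by
  constructor
  · intro j s a
    rcases eq_or_ne j i with rfl | hj
    · simpa using h0 s a
    · simpa [hj] using hπ.1 j s a
  · intro j s
    rcases eq_or_ne j i with rfl | hj
    · simpa using h1 s
    · simpa [hj] using hπ.2 j s

lemma isProfile_dev {π : Profile n S A} (hπ : IsProfile π) (i : Fin n) (s : Fin S)
    (a : Fin (A i)) : IsProfile (devProfile π i s a) := by
  refine isProfile_update hπ i ?_ ?_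
  · intro t b
    split_ifs
    exacts [zero_le_one, le_rfl, hπ.1 i t b]
  · intro t
    by_cases h : t = s
    · simp [h]
    · simp [h, hπ.2 i t]

lemma jointProb_update (π : Profile n S A) (i : Fin n) (σ : Fin S → Fin (A i) → ℝ) (t : Fin S)
    (a : ∀ j, Fin (A j)) :
    jointProb (Function.update π i σ) t a
      = σ t (a i) * ∏ j ∈ Finset.univ.erase i, π j t (a j) := by
  unfold jointProb
  rw [← Finset.mul_prod_erase Finset.univ _ (Finset.mem_univ i), Function.update_self]
  congr 1
  refine Finset.prod_congr rfl fun j hj => ?_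
  rw [Function.update_of_ne (Finset.ne_of_mem_erase hj)]

/-- The joint action law at `t` is the mixture, over agent `i`'s own action, of the laws in which
that action is played purely. -/
lemma jointProb_mix (π : Profile n S A) (i : Fin n) (σ : Fin S → Fin (A i) → ℝ) (t : Fin S)
    (a : ∀ j, Fin (A j)) :
    jointProb (Function.update π i σ) t a
      = ∑ b, σ t b * jointProb (devProfile π i t b) t a := by
  unfold devProfile
  simp only [jointProb_update]
  simp

lemma jointProb_dev_of_ne (π : Profile n S A) (i : Fin n) {s t : Fin S} (h : t ≠ s)
    (b : Fin (A i)) (a : ∀ j, Fin (A j)) :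
    jointProb (devProfile π i s b) t a = jointProb π t a := by
  unfold devProfile
  rw [jointProb_update]
  simp only [h, if_false]
  exact Finset.mul_prod_erase Finset.univ (fun j => π j t (a j)) (Finset.mem_univ i)

/-- Expected return of agent `i` at `t` if the profile `ρ` is played for one step and `π` is
followed afterwards. -/
noncomputable def oneStep (g : SG n S A) (π : Profile n S A) (i : Fin n) (ρ : Profile n S A)
    (t : Fin S) : ℝ :=
  g.rvec ρ i t + g.γ * ∑ t', g.Pmat ρ t t' * g.V π i t'

/-- The advantage of agent `i` at `t` from playing `b` once and following `π` afterwards. -/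
noncomputable def adv (g : SG n S A) (π : Profile n S A) (i : Fin n) (t : Fin S)
    (b : Fin (A i)) : ℝ :=
  g.oneStep π i (devProfile π i t b) t - g.V π i t

lemma oneStep_eq (g : SG n S A) (π : Profile n S A) (i : Fin n) (ρ : Profile n S A) (t : Fin S) :
    g.oneStep π i ρ t
      = ∑ a, jointProb ρ t a * (g.r i t a + g.γ * ∑ t', g.P t a t' * g.V π i t') := by
  unfold oneStep rvec Pmat
  simp only [Finset.sum_mul, mul_add, Finset.sum_add_distrib]
  congr 1
  rw [Finset.sum_comm, Finset.mul_sum]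
  refine Finset.sum_congr rfl fun a _ => ?_
  simp only [Finset.mul_sum]
  exact Finset.sum_congr rfl fun t' _ => by ring

lemma oneStep_self (g : SG n S A) {π : Profile n S A} (hπ : IsProfile π) (i : Fin n)
    (t : Fin S) : g.oneStep π i π t = g.V π i t :=
  (g.bellman hπ i t).symm

lemma oneStep_update (g : SG n S A) (π : Profile n S A) (i : Fin n)
    {σ : Fin S → Fin (A i) → ℝ} (h1 : ∀ t, ∑ b, σ t b = 1) (t : Fin S) :
    g.oneStep π i (Function.update π i σ) t - g.V π i t = ∑ b, σ t b * g.adv π i t b := by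
  have h : g.oneStep π i (Function.update π i σ) t
      = ∑ b, σ t b * g.oneStep π i (devProfile π i t b) t := by
    simp only [oneStep_eq, jointProb_mix, Finset.sum_mul, Finset.mul_sum]
    rw [Finset.sum_comm]
    simp only [mul_assoc]
  unfold adv
  simp only [mul_sub, Finset.sum_sub_distrib, ← Finset.sum_mul, h1, one_mul, h]

lemma sum_adv (g : SG n S A) {π : Profile n S A} (hπ : IsProfile π) (i : Fin n) (t : Fin S) :
    ∑ b, π i t b * g.adv π i t b = 0 := by
  rw [← g.oneStep_update π i (hπ.2 i) t, Function.update_eq_self, g.oneStep_self hπ, sub_self]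

lemma adv_ge (g : SG n S A) {π : Profile n S A} (hπ : IsProfile π) (i : Fin n) (t : Fin S)
    (b : Fin (A i)) : -(g.Rmax / (1 - g.γ)) ≤ g.adv π i t b := by
  have h1 := g.rvec_nonneg (isProfile_dev hπ i t b) i t
  have h2 : 0 ≤ ∑ t', g.Pmat (devProfile π i t b) t t' * g.V π i t' :=
    Finset.sum_nonneg fun t' _ =>
      mul_nonneg (g.Pmat_nonneg (isProfile_dev hπ i t b) t t') (g.V_nonneg hπ i t')
  have h3 := mul_nonneg g.γ_nonneg h2
  have h4 := g.V_le hπ i t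
  unfold adv oneStep
  linarith

/-- The gain from `ρ` solves a Bellman equation whose reward is the one-step gain. -/
lemma V_sub_eq (g : SG n S A) (π : Profile n S A) (i : Fin n) {ρ : Profile n S A}
    (hρ : IsProfile ρ) (t : Fin S) :
    g.V ρ i t - g.V π i t = (g.oneStep π i ρ t - g.V π i t)
      + g.γ * ∑ t', g.Pmat ρ t t' * (g.V ρ i t' - g.V π i t') := by
  have h := g.bellman hρ i t
  unfold oneStep
  simp only [mul_sub, Finset.sum_sub_distrib]
  linarith

lemma oneStep_dev_of_ne (g : SG n S A) {π : Profile n S A} (hπ : IsProfile π) (i : Fin n)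
    {s t : Fin S} (h : t ≠ s) (b : Fin (A i)) :
    g.oneStep π i (devProfile π i s b) t = g.V π i t := by
  rw [← g.oneStep_self hπ, oneStep_eq, oneStep_eq]
  simp only [jointProb_dev_of_ne π i h]

lemma D_eq_zero (g : SG n S A) {π : Profile n S A} (hπ : IsProfile π) (i : Fin n) (s : Fin S)
    (b : Fin (A i)) (hx : g.adv π i s b ≤ 0) : g.D π i s b = 0 := by
  have hρ := isProfile_dev hπ i s b
  have h := le_of_sub (g.Pmat_nonneg hρ) (g.Pmat_sum hρ) g.γ_nonneg g.γ_lt_one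
    (u := fun t => g.V (devProfile π i s b) i t - g.V π i t) (c := 0) (fun t => by
      have h := g.V_sub_eq π i hρ t
      have h' : g.oneStep π i (devProfile π i s b) t - g.V π i t ≤ 0 := by
        rcases eq_or_ne t s with rfl | ht
        · exact hx
        · rw [g.oneStep_dev_of_ne hπ i ht, sub_self]
      linarith) s
  rw [zero_div] at h
  exact max_eq_left h

lemma D_nonneg (g : SG n S A) (π : Profile n S A) (i : Fin n) (s : Fin S) (b : Fin (A i)) :
    0 ≤ g.D π i s b := le_max_left _ _

/-- Deviating at every visit to `s` gains at least the advantage collected at the first visit. -/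
lemma adv_le_D (g : SG n S A) {π : Profile n S A} (hπ : IsProfile π) (i : Fin n) (s : Fin S)
    (b : Fin (A i)) : g.adv π i s b ≤ g.D π i s b := by
  rcases le_total (g.adv π i s b) 0 with hx | hx
  · exact hx.trans (g.D_nonneg π i s b)
  have hρ := isProfile_dev hπ i s b
  have h : ∀ t, -(g.V (devProfile π i s b) i t - g.V π i t) ≤ 0 / (1 - g.γ) :=
    le_of_sub (g.Pmat_nonneg hρ) (g.Pmat_sum hρ) g.γ_nonneg g.γ_lt_one
    (u := fun t => -(g.V (devProfile π i s b) i t - g.V π i t)) (c := 0) (fun t => by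
      have h := g.V_sub_eq π i hρ t
      have h' : 0 ≤ g.oneStep π i (devProfile π i s b) t - g.V π i t := by
        rcases eq_or_ne t s with rfl | ht
        · exact hx
        · rw [g.oneStep_dev_of_ne hπ i ht, sub_self]
      simp only [mul_neg, Finset.sum_neg_distrib]
      linarith)
  have h2 : 0 ≤ ∑ t', g.Pmat (devProfile π i s b) s t'
      * (g.V (devProfile π i s b) i t' - g.V π i t') :=
    Finset.sum_nonneg fun t' _ => mul_nonneg (g.Pmat_nonneg hρ s t') (by
      have := h t'
      rw [zero_div] at this
      linarith)
  have h3 := mul_nonneg g.γ_nonneg h2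
  have h4 := g.V_sub_eq π i hρ s
  have h5 : g.V (devProfile π i s b) i s - g.V π i s ≤ g.D π i s b := le_max_right _ _
  unfold adv
  linarith

lemma D_le (g : SG n S A) {π : Profile n S A} (hπ : IsProfile π) (i : Fin n) (s : Fin S)
    (b : Fin (A i)) : g.D π i s b ≤ g.Rmax / (1 - g.γ) := by
  have h1 := g.V_le (isProfile_dev hπ i s b) i s
  have h2 := g.V_nonneg hπ i s
  exact max_le (h2.trans (g.V_le hπ i s)) (by unfold Vdev; linarith)

/-! ### The advantage bound at an approximate fixed point -/

/-- The mean-zero condition `∑ p x = 0`, weighted by `∑ D`, bounds every positive `x a`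
quadratically: terms with `x b ≤ 0` have `p b * ∑ D ≤ e`. -/
lemma adv_quadratic {ι : Type*} [Fintype ι] {p x D : ι → ℝ} {e B : ℝ}
    (hp : ∀ b, 0 ≤ p b) (hpx : ∑ b, p b * x b = 0) (hD : ∀ b, 0 ≤ D b) (hxD : ∀ b, x b ≤ D b)
    (hD0 : ∀ b, x b ≤ 0 → D b = 0) (he : 0 ≤ e) (hB : 0 ≤ B)
    (hfix : ∀ b, |D b - p b * ∑ c, D c| ≤ e) (hx : ∀ b, -B ≤ x b) {a : ι} (ha : 0 < x a) :
    x a * (x a - e) ≤ Fintype.card ι * (e * B) := by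
  classical
  set T := ∑ c, D c with hT
  have hT0 : 0 ≤ T := Finset.sum_nonneg fun b _ => hD b
  have key : ∀ b, (if b = a then x a * (x a - e) else 0) - e * B ≤ T * (p b * x b) := by
    intro b
    have hb := abs_le.1 (hfix b)
    have hpT : 0 ≤ p b * T := mul_nonneg (hp b) hT0
    split_ifs with h
    · subst h
      have : (x b - e) * x b ≤ (p b * T) * x b :=
        mul_le_mul_of_nonneg_right (by linarith [hxD b, hb.2]) ha.le
      nlinarith [mul_nonneg he hB]
    · rcases le_total (x b) 0 with hb0 | hb0
      · have h1 : p b * T ≤ e := by linarith [hD0 b hb0, hb.1]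
        have h2 : (p b * T) * (-x b) ≤ e * B :=
          mul_le_mul h1 (by linarith [hx b]) (by linarith) he
        nlinarith
      · nlinarith [mul_nonneg he hB, mul_nonneg hpT hb0]
  have hsum := Finset.sum_le_sum fun b (_ : b ∈ Finset.univ) => key b
  rw [← Finset.mul_sum, hpx, Finset.sum_sub_distrib, Finset.sum_ite_eq' Finset.univ a] at hsum
  simp only [Finset.mem_univ, if_true, Finset.sum_const, Finset.card_univ, nsmul_eq_mul] at hsum
  linarith

/-- The crude AM-GM bound `k R ≤ (k + R)²` solves the quadratic inequality for `x`. -/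
lemma le_of_quadratic {x e k R N M : ℝ} (he : 0 ≤ e) (hk : 0 ≤ k) (hR : 0 ≤ R) (hM : 1 ≤ M)
    (hNM : N ≤ M) (h : x * (x - e) ≤ N * (e * (R * k))) :
    x ≤ M * (Real.sqrt e * k + R * Real.sqrt e + e) := by
  by_contra! hx
  set w := Real.sqrt e with hw
  have hw0 : 0 ≤ w := Real.sqrt_nonneg e
  have hwe : w * w = e := Real.mul_self_sqrt he
  set y := w * k + R * w with hy
  have hy0 : 0 ≤ y := by positivity
  have hMe : e ≤ M * e := le_mul_of_one_le_left he hM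
  have hMy : 0 ≤ M * y := by positivity
  have h1 : M * y < x - e := by nlinarith
  have h2 : M * y < x := by linarith
  have h3 : (M * y) * (M * y) < x * (x - e) := mul_lt_mul'' h2 h1 hMy hMy
  have h4 : e * (R * k) ≤ y * y := by
    have : y * y = e * (R * k) + e * (k * k + R * k + R * R) := by rw [hy, ← hwe]; ring
    have : 0 ≤ e * (k * k + R * k + R * R) := by positivity
    linarith
  have h5 : N * (e * (R * k)) ≤ M * (e * (R * k)) :=
    mul_le_mul_of_nonneg_right hNM (by positivity)
  have h6 : M * (e * (R * k)) ≤ M * (y * y) := mul_le_mul_of_nonneg_left h4 (by linarith)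
  have h7 : M * (y * y) ≤ M * (M * (y * y)) :=
    le_mul_of_one_le_left (by positivity) hM
  nlinarith

lemma adv_le (g : SG n S A) {π : Profile n S A} (hπ : IsProfile π) {ε : ℝ} (hε : 0 < ε)
    (hfix : ∀ i s a, |g.f π i s a - π i s a| ≤ ε) {ε' : ℝ}
    (hε' : ε' = ε * (1 + (Amax A : ℝ) * g.Rmax / (1 - g.γ))) (i : Fin n) (t : Fin S)
    (a : Fin (A i)) :
    g.adv π i t a ≤
      (Amax A : ℝ) * (Real.sqrt ε' / (1 - g.γ) + g.Rmax * Real.sqrt ε' + ε') := by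
  have hγ : 0 < 1 - g.γ := sub_pos.2 g.γ_lt_one
  have hB : 0 ≤ g.Rmax / (1 - g.γ) := (g.V_nonneg hπ i t).trans (g.V_le hπ i t)
  have hR : 0 ≤ g.Rmax := (g.rvec_nonneg hπ i t).trans (g.rvec_le hπ i t)
  have hAi : A i ≤ Amax A := Finset.le_sup (Finset.mem_univ i)
  have hAi' : (A i : ℝ) ≤ Amax A := by exact_mod_cast hAi
  have hA1 : (1 : ℝ) ≤ Amax A := by exact_mod_cast (Nat.succ_le_of_lt a.pos).trans hAi
  have hε'0 : 0 ≤ ε' := by rw [hε']; positivity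
  have hTle : ∑ c, g.D π i t c ≤ (Amax A : ℝ) * g.Rmax / (1 - g.γ) := by
    calc ∑ c, g.D π i t c ≤ ∑ _c : Fin (A i), g.Rmax / (1 - g.γ) :=
          Finset.sum_le_sum fun c _ => g.D_le hπ i t c
      _ = (A i : ℝ) * (g.Rmax / (1 - g.γ)) := by simp
      _ ≤ (Amax A : ℝ) * (g.Rmax / (1 - g.γ)) := mul_le_mul_of_nonneg_right hAi' hB
      _ = _ := by ring
  have hT0 : 0 ≤ ∑ c, g.D π i t c := Finset.sum_nonneg fun c _ => g.D_nonneg π i t c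
  have hfix' : ∀ b, |g.D π i t b - π i t b * ∑ c, g.D π i t c| ≤ ε' := by
    intro b
    have h := hfix i t b
    have heq : g.D π i t b - π i t b * ∑ c, g.D π i t c
        = (g.f π i t b - π i t b) * (1 + ∑ c, g.D π i t c) := by
      unfold f
      field_simp
      ring
    rw [heq, abs_mul, abs_of_nonneg (by linarith : 0 ≤ 1 + ∑ c, g.D π i t c), hε']
    exact mul_le_mul h (by linarith) (by linarith) hε.le
  rcases le_or_gt (g.adv π i t a) 0 with hx | hx
  · exact hx.trans (by positivity)
  have hq := adv_quadratic (hπ.1 i t) (g.sum_adv hπ i t) (g.D_nonneg π i t) (g.adv_le_D hπ i t)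
    (g.D_eq_zero hπ i t) hε'0 hB hfix' (g.adv_ge hπ i t) hx
  rw [Fintype.card_fin, div_eq_mul_inv] at hq
  have := le_of_quadratic hε'0 (inv_nonneg.2 hγ.le) hR hA1 hAi' hq
  rwa [← div_eq_mul_inv] at this

end SG

open SG in
/-- an `ε`-approximate fixed point of `f` is a
`A_max(√ε'/(1−γ) + R_max√ε' + ε')/(1−γ)`-approximate MPE, `ε' = ε(1 + A_max R_max/(1−γ))`. -/
theorem isApproxMPE_of_approxFixedPt {n S : ℕ} {A : Fin n → ℕ} (g : SG n S A)
    (π : Profile n S A) (hπ : IsProfile π)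
    (ε : ℝ) (hε : 0 < ε) (hfix : ∀ i s a, |g.f π i s a - π i s a| ≤ ε)
    (ε' : ℝ) (hε' : ε' = ε * (1 + (Amax A : ℝ) * g.Rmax / (1 - g.γ))) :
    g.IsApproxMPE π
      ((Amax A : ℝ) * (Real.sqrt ε' / (1 - g.γ) + g.Rmax * Real.sqrt ε' + ε') / (1 - g.γ)) := by
  intro s i σ hσ
  have hρ := isProfile_update hπ i hσ.1 hσ.2
  have h := le_of_sub (g.Pmat_nonneg hρ) (g.Pmat_sum hρ) g.γ_nonneg g.γ_lt_one
    (u := fun t => g.V (Function.update π i σ) i t - g.V π i t)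
    (c := (Amax A : ℝ) * (Real.sqrt ε' / (1 - g.γ) + g.Rmax * Real.sqrt ε' + ε')) (fun t => by
      have h := g.V_sub_eq π i hρ t
      rw [g.oneStep_update π i hσ.2 t] at h
      have h' : ∑ b, σ t b * g.adv π i t b
          ≤ (Amax A : ℝ) * (Real.sqrt ε' / (1 - g.γ) + g.Rmax * Real.sqrt ε' + ε') := by
        calc ∑ b, σ t b * g.adv π i t b
            ≤ ∑ b, σ t b *
              ((Amax A : ℝ) * (Real.sqrt ε' / (1 - g.γ) + g.Rmax * Real.sqrt ε' + ε')) :=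
              Finset.sum_le_sum fun b _ =>
                mul_le_mul_of_nonneg_left (g.adv_le hπ hε hfix hε' i t b) (hσ.1 t b)
          _ = _ := by rw [← Finset.sum_mul, hσ.2, one_mul]
      linarith) s
  linarith
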